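/- Let A', A, B', B be finite nonempty types, ρ : Matrix (A' × A × B') (A' × A × B') ℂ positive semidefinite, and J : Matrix (A × B) (A × B) ℂ positive semidefinite. Define ω : Matrix (A' × B × B') (A' × B × B') ℂ by ω (a',b,b') (â',b̂,b̂') = ∑_{a,â} ρ (a',a,b') (â',â,b̂') * J (a,b) (â,b̂). Define the real numbers Wρ := sInf {t : ℝ | ∃ C D, C.PosSemidef ∧ D.PosSemidef ∧ ρ ≤ T_{B'}(C − D) ∧ t = Re(trace(C + D))}, Γ := sInf {μ : ℝ | ∃ V Y, V.PosSemidef ∧ Y.PosSemidef ∧ J ≤ T_B(V − Y) ∧ Tr_B(V + Y) ≤ μ • (1 : Matrix A A ℂ)}, and Wω := sInf {t : ℝ | ∃ E F, E.PosSemidef ∧ F.PosSemidef ∧ ω ≤ T_{BB'}(E − F) ∧ t = Re(trace(E + F))}. Then Wω ≤ Γ * Wρ. (This is the inequality W(A';BB')_ω ≤ Γ(N) · W(A'A;B')_ρ, equivalent to Proposition 1 after taking logarithms.) -/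

import Mathlib

open Matrix ComplexOrder Kronecker

noncomputable section

/-- Partial transpose over the last (`γ`) factor of a matrix on `α × β × γ`:
`T_γ(X) (a,b,c) (a',b',c') = X (a,b,c') (a',b',c)`. -/
def ptLast {α β γ : Type*} (X : Matrix (α × β × γ) (α × β × γ) ℂ) :
    Matrix (α × β × γ) (α × β × γ) ℂ :=
  Matrix.of fun x y => X (x.1, x.2.1, y.2.2) (y.1, y.2.1, x.2.2)

/-- Partial transpose over `β` of a matrix on `α × β`:
`T_β(X) (a,b) (a',b') = X (a,b') (a',b)`. -/
def ptSnd {α β : Type*} (X : Matrix (α × β) (α × β) ℂ) : Matrix (α × β) (α × β) ℂ :=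
  Matrix.of fun x y => X (x.1, y.2) (y.1, x.2)

/-- Joint partial transpose over `β` and `γ` of a matrix on `α × β × γ`:
`T_{βγ}(X) (a,b,c) (a',b',c') = X (a,b',c') (a',b,c)`. -/
def ptBoth {α β γ : Type*} (X : Matrix (α × β × γ) (α × β × γ) ℂ) :
    Matrix (α × β × γ) (α × β × γ) ℂ :=
  Matrix.of fun x y => X (x.1, y.2.1, y.2.2) (y.1, x.2.1, x.2.2)

/-- Partial trace over the second factor: `(Tr_β X) a a' = ∑ b, X (a,b) (a',b)`. -/
def ptrSnd {α β : Type*} [Fintype β] (X : Matrix (α × β) (α × β) ℂ) : Matrix α α ℂ :=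
  Matrix.of fun a a' => ∑ b, X (a, b) (a', b)

/-- Membership in the separable cone `SEP(α:β)`. -/
def InSepCone {α β : Type*} [Fintype α] [Fintype β] (X : Matrix (α × β) (α × β) ℂ) : Prop :=
  ∃ (n : ℕ) (P : Fin n → Matrix α α ℂ) (Q : Fin n → Matrix β β ℂ),
    (∀ i, (P i).PosSemidef) ∧ (∀ i, (Q i).PosSemidef) ∧
    ∀ x y : α × β, X x y = ∑ i, P i x.1 y.1 * Q i x.2 y.2

open scoped Matrix.Norms.L2Operator MatrixOrder in
lemma exists_smul_one_sub_psd {n : Type*} [Fintype n] [DecidableEq n] (H : Matrix n n ℂ)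
    (hH : H.IsHermitian) : ∃ μ : ℝ, (μ • (1 : Matrix n n ℂ) - H).PosSemidef := by
  have h : IsSelfAdjoint H := hH
  have := h.le_algebraMap_norm_self
  refine ⟨‖H‖, ?_⟩
  rw [Algebra.algebraMap_eq_smul_one] at this
  exact Matrix.le_iff.1 this

/-- A Hermitian matrix is a difference of two positive semidefinite ones. -/
lemma exists_psd_sub_psd {n : Type*} [Fintype n] (H : Matrix n n ℂ)
    (hH : H.IsHermitian) : ∃ P Q : Matrix n n ℂ, P.PosSemidef ∧ Q.PosSemidef ∧ P - Q = H := by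
  classical
  obtain ⟨μ, hμ⟩ := exists_smul_one_sub_psd H hH
  obtain ⟨ν, hν⟩ := exists_smul_one_sub_psd (-H) hH.neg
  have h1 : (|ν| • (1 : Matrix n n ℂ)).PosSemidef :=
    Matrix.PosSemidef.one.smul (abs_nonneg ν)
  have h2 : ((|ν| - ν) • (1 : Matrix n n ℂ)).PosSemidef :=
    Matrix.PosSemidef.one.smul (sub_nonneg.2 (le_abs_self ν))
  refine ⟨_, _, hν.add h2, h1, ?_⟩
  rw [sub_smul]
  abel

lemma psd_sum_snd {n m : Type*} [Fintype n] [Fintype m] (K : Matrix (n × m) (n × m) ℂ)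
    (hK : K.PosSemidef) :
    (Matrix.of fun x y : n => ∑ a : m, ∑ b : m, K (x, a) (y, b)).PosSemidef := by
  rw [Matrix.posSemidef_iff_dotProduct_mulVec]
  constructor
  · ext x y
    simp only [Matrix.conjTranspose_apply, Matrix.of_apply, star_sum, hK.1.apply]
    rw [Finset.sum_comm]
  · intro v
    have := hK.dotProduct_mulVec_nonneg (fun p => v p.1)
    convert this using 1
    simp only [dotProduct, Matrix.mulVec, Matrix.of_apply, Fintype.sum_prod_type, Finset.mul_sum,
      Finset.sum_mul, Pi.star_apply]
    refine Finset.sum_congr rfl fun x _ => ?_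
    rw [Finset.sum_comm]

/-- Link product of `X` and `Z` over `A`. -/
def contr {A' A B' B : Type*} [Fintype A] (X : Matrix (A' × A × B') (A' × A × B') ℂ)
    (Z : Matrix (A × B) (A × B) ℂ) : Matrix (A' × B × B') (A' × B × B') ℂ :=
  Matrix.of fun x y => ∑ a : A, ∑ a2 : A,
      X (x.1, a, x.2.2) (y.1, a2, y.2.2) * Z (a, x.2.1) (a2, y.2.1)

section
variable {A' A B' B : Type*} [Fintype A'] [Fintype A] [Fintype B'] [Fintype B]

lemma contr_psd {X : Matrix (A' × A × B') (A' × A × B') ℂ}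
    {Z : Matrix (A × B) (A × B) ℂ} (hX : X.PosSemidef) (hZ : Z.PosSemidef) :
    (contr X Z).PosSemidef := by
  have h1 := hX.submatrix (fun p : (A' × B × B') × A => (p.1.1, p.2, p.1.2.2))
  have h2 := hZ.submatrix (fun p : (A' × B × B') × A => (p.2, p.1.2.1))
  have h3 := psd_sum_snd _ (h1.hadamard h2)
  simp only [Matrix.hadamard_apply, Matrix.submatrix_apply] at h3
  exact h3

lemma contr_add_left (X X' : Matrix (A' × A × B') (A' × A × B') ℂ) (Z : Matrix (A × B) (A × B) ℂ) :
    contr (X + X') Z = contr X Z + contr X' Z := by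
  ext x y; simp [contr, add_mul, Finset.sum_add_distrib]

lemma contr_sub_left (X X' : Matrix (A' × A × B') (A' × A × B') ℂ) (Z : Matrix (A × B) (A × B) ℂ) :
    contr (X - X') Z = contr X Z - contr X' Z := by
  ext x y; simp [contr, sub_mul, Finset.sum_sub_distrib]

lemma contr_add_right (X : Matrix (A' × A × B') (A' × A × B') ℂ) (Z Z' : Matrix (A × B) (A × B) ℂ) :
    contr X (Z + Z') = contr X Z + contr X Z' := by
  ext x y; simp [contr, mul_add, Finset.sum_add_distrib]

lemma contr_sub_right (X : Matrix (A' × A × B') (A' × A × B') ℂ) (Z Z' : Matrix (A × B) (A × B) ℂ) :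
    contr X (Z - Z') = contr X Z - contr X Z' := by
  ext x y; simp [contr, mul_sub, Finset.sum_sub_distrib]

lemma contr_pt (X : Matrix (A' × A × B') (A' × A × B') ℂ) (Z : Matrix (A × B) (A × B) ℂ) :
    contr (ptLast X) (ptSnd Z) = ptBoth (contr X Z) := rfl

lemma ptrSnd_psd {V : Matrix (A × B) (A × B) ℂ} (hV : V.PosSemidef) : (ptrSnd V).PosSemidef := by
  have : ptrSnd V = ∑ b, V.submatrix (fun a => (a, b)) (fun a => (a, b)) := by
    ext a a'; simp [ptrSnd, Matrix.sum_apply]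
  rw [this]
  exact Matrix.posSemidef_sum _ fun b _ => hV.submatrix _

lemma contr_trace_le [DecidableEq A] {S : Matrix (A' × A × B') (A' × A × B') ℂ}
    {G : Matrix (A × B) (A × B) ℂ}
    {μ : ℝ} (hS : S.PosSemidef) (h : (μ • (1 : Matrix A A ℂ) - ptrSnd G).PosSemidef) :
    (contr S G).trace.re ≤ μ * S.trace.re := by
  have h1 := (contr_psd hS (h.submatrix (fun p : A × Unit => p.1))).trace_nonneg
  have h2 : (contr S ((μ • (1 : Matrix A A ℂ) - ptrSnd G).submatrix (fun p : A × Unit => p.1)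
      (fun p : A × Unit => p.1))).trace = μ * S.trace - (contr S G).trace := by
    simp only [contr, Matrix.trace, Matrix.diag_apply, Matrix.of_apply, Matrix.submatrix_apply,
      Matrix.sub_apply, Matrix.smul_apply, Matrix.one_apply, ptrSnd, mul_sub,
      Finset.sum_sub_distrib, Fintype.sum_prod_type, Finset.mul_sum]
    congr 1
    · refine Finset.sum_congr rfl fun x _ => ?_
      simp only [Finset.univ_unique, Finset.sum_singleton]
      rw [Finset.sum_comm]
      refine Finset.sum_congr rfl fun a _ => Finset.sum_congr rfl fun b _ => ?_
      simp [mul_comm]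
    · refine Finset.sum_congr rfl fun x _ => ?_
      simp only [Finset.univ_unique, Finset.sum_singleton]
      rw [Finset.sum_comm (s := (Finset.univ : Finset B))]
      refine Finset.sum_congr rfl fun b' _ => ?_
      rw [Finset.sum_comm (s := (Finset.univ : Finset B))]
      refine Finset.sum_congr rfl fun a _ => ?_
      rw [Finset.sum_comm (s := (Finset.univ : Finset B))]
  rw [h2] at h1
  have h3 := (Complex.le_def.1 h1).1
  simp at h3
  exact h3

end

lemma le_sInf_mul_sInf {w : ℝ} {M T : Set ℝ} (hM : M.Nonempty) (hT : T.Nonempty)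
    (hM0 : ∀ μ ∈ M, 0 ≤ μ) (hT0 : ∀ t ∈ T, 0 ≤ t) (h : ∀ μ ∈ M, ∀ t ∈ T, w ≤ μ * t) :
    w ≤ sInf M * sInf T := by
  have key : ∀ (s : ℝ) (U : Set ℝ), U.Nonempty → 0 ≤ s → (∀ u ∈ U, w ≤ s * u) →
      w ≤ s * sInf U := by
    intro s U hU hs hsU
    rcases hs.eq_or_lt with rfl | hs
    · obtain ⟨u, hu⟩ := hU
      simpa using hsU u hu
    · rw [← div_le_iff₀' hs]
      exact le_csInf hU fun u hu => (div_le_iff₀' hs).2 (hsU u hu)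
  refine key _ _ hT (Real.sInf_nonneg hM0) fun t ht => ?_
  rw [mul_comm]
  refine key _ _ hM (hT0 t ht) fun μ hμ => ?_
  rw [mul_comm]
  exact h μ hμ t ht

/-- `W(A';BB')_ω ≤ Γ(N) ⬝ W(A'A;B')_ρ`: the SDP-value form of Proposition 1. -/
theorem max_rains_sdp_value_inequality
    {A' A B' B : Type*}
    [Fintype A'] [Fintype A] [Fintype B'] [Fintype B] [DecidableEq A]
    [Nonempty A'] [Nonempty A] [Nonempty B'] [Nonempty B]
    (ρ : Matrix (A' × A × B') (A' × A × B') ℂ) (J : Matrix (A × B) (A × B) ℂ)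
    (hρ : ρ.PosSemidef) (hJ : J.PosSemidef)
    (ω : Matrix (A' × B × B') (A' × B × B') ℂ)
    (hω : ∀ x y, ω x y = ∑ a : A, ∑ a2 : A,
      ρ (x.1, a, x.2.2) (y.1, a2, y.2.2) * J (a, x.2.1) (a2, y.2.1)) :
    sInf {t : ℝ | ∃ E F : Matrix (A' × B × B') (A' × B × B') ℂ,
        E.PosSemidef ∧ F.PosSemidef ∧ (ptBoth (E - F) - ω).PosSemidef ∧
        t = ((E + F).trace).re}
      ≤ (sInf {μ : ℝ | ∃ V Y : Matrix (A × B) (A × B) ℂ,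
            V.PosSemidef ∧ Y.PosSemidef ∧ (ptSnd (V - Y) - J).PosSemidef ∧
            (μ • (1 : Matrix A A ℂ) - ptrSnd (V + Y)).PosSemidef})
        * sInf {t : ℝ | ∃ C D : Matrix (A' × A × B') (A' × A × B') ℂ,
            C.PosSemidef ∧ D.PosSemidef ∧ (ptLast (C - D) - ρ).PosSemidef ∧
            t = ((C + D).trace).re} := by
  have hω' : ω = contr ρ J := by ext x y; exact hω x y
  subst hω'
  apply le_sInf_mul_sInf
  · obtain ⟨V, Y, hV, hY, h⟩ := exists_psd_sub_psd (ptSnd J) (by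
      ext x y; exact hJ.1.apply _ _)
    obtain ⟨μ, hμ⟩ := exists_smul_one_sub_psd _ (ptrSnd_psd (hV.add hY)).1
    refine ⟨μ, V, Y, hV, hY, ?_, hμ⟩
    rw [h]
    have : ptSnd (ptSnd J) = J := rfl
    rw [this, sub_self]
    exact Matrix.PosSemidef.zero
  · obtain ⟨V, Y, hV, hY, h⟩ := exists_psd_sub_psd (ptLast ρ) (by
      ext x y; exact hρ.1.apply _ _)
    refine ⟨_, V, Y, hV, hY, ?_, rfl⟩
    rw [h]
    have : ptLast (ptLast ρ) = ρ := rfl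
    rw [this, sub_self]
    exact Matrix.PosSemidef.zero
  · rintro μ ⟨V, Y, hV, hY, -, hμ⟩
    obtain ⟨a⟩ := ‹Nonempty A›
    have h := (hμ.add (ptrSnd_psd (hV.add hY))).diag_nonneg (i := a)
    rw [sub_add_cancel] at h
    simpa using h
  · rintro t ⟨C, D, hC, hD, -, rfl⟩
    exact (Complex.le_def.1 (hC.add hD).trace_nonneg).1
  · rintro μ ⟨V, Y, hV, hY, hVY, hμ⟩ t ⟨C, D, hC, hD, hCD, rfl⟩
    refine le_trans ?_ (contr_trace_le (hC.add hD) hμ)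
    refine csInf_le ⟨0, ?_⟩ ⟨contr C V + contr D Y, contr C Y + contr D V,
      (contr_psd hC hV).add (contr_psd hD hY), (contr_psd hC hY).add (contr_psd hD hV), ?_, ?_⟩
    · rintro t ⟨E, F, hE, hF, -, rfl⟩
      exact (Complex.le_def.1 (hE.add hF).trace_nonneg).1
    · have e1 : contr C V + contr D Y - (contr C Y + contr D V) = contr (C - D) (V - Y) := by
        rw [contr_sub_left, contr_sub_right, contr_sub_right]; abel
      have hV' : (ptSnd (V - Y)).PosSemidef := by
        have := hVY.add hJ
        rwa [sub_add_cancel] at this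
      have e2 : contr (ptLast (C - D)) (ptSnd (V - Y)) - contr ρ J =
          contr (ptLast (C - D) - ρ) (ptSnd (V - Y)) + contr ρ (ptSnd (V - Y) - J) := by
        rw [contr_sub_left, contr_sub_right]; abel
      rw [e1, ← contr_pt, e2]
      exact (contr_psd hCD hV').add (contr_psd hρ hVY)
    · rw [contr_add_left, contr_add_right, contr_add_right]
      congr 2; abel
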